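/- Let N ≥ 1, let w_{i j} = w_{j i} (1 ≤ i ≠ j ≤ N) be a symmetric family of real weights, and let λ_1, …, λ_N be arbitrary real numbers. Then the sum over all directed forests G on the vertex set {1,…,N} of ( ∏_{(j→k) edge of G} w_{j k} ) · H₂(roots(G)) equals 2 · ( Σ_{1 ≤ i < j ≤ N} (λ_i − λ_j)² ) · τ(w), where H₂ is the weighted-endpoint path polynomial of the weights w and the parameters λ. -/

import Mathlib

open scoped Classical

/-- Iterate the partial successor map `G` for `n` steps starting from `i`. -/
def stepIter {N : ℕ} (G : Fin N → Option (Fin N)) : ℕ → Fin N → Option (Fin N)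
  | 0, i => some i
  | n + 1, i => (stepIter G n i).bind G

/-- A directed forest on `{1,…,N}`: every vertex has at most one outgoing edge
(encoded by `G i = some j` meaning an edge `i → j`) and there is no directed cycle. -/
def IsForest {N : ℕ} (G : Fin N → Option (Fin N)) : Prop :=
  ∀ (i : Fin N) (n : ℕ), 0 < n → stepIter G n i ≠ some i

/-- The roots of the directed graph `G`: the vertices with no outgoing edge. -/
def roots {N : ℕ} (G : Fin N → Option (Fin N)) : Finset (Fin N) :=
  Finset.univ.filter (fun i => G i = none)

/-- The product of the weights along the consecutive pairs of a list. -/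
noncomputable def chainProd {N : ℕ} (w : Fin N → Fin N → ℝ) (l : List (Fin N)) : ℝ :=
  ((l.zip l.tail).map (fun p => w p.1 p.2)).prod

/-- The weighted-endpoint path polynomial
`H₂(S) = ∑_{(a_1,…,a_m) enumeration of S} (∏_{r=1}^{m-1} w_{a_r a_{r+1}}) · (λ_{a_1} - λ_{a_m})²`
(`H₂` of a singleton is `0`). -/
noncomputable def pathPoly₂ {N : ℕ} (w : Fin N → Fin N → ℝ) (lam : Fin N → ℝ)
    (S : Finset (Fin N)) : ℝ :=
  (S.toList.permutations.map
    (fun l => chainProd w l * (l.head?.elim 0 lam - l.getLast?.elim 0 lam) ^ 2)).sum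

/-- The weight of a directed graph `G`: the product of `w j k` over the edges `j → k`. -/
noncomputable def forestWeight {N : ℕ} (w : Fin N → Fin N → ℝ)
    (G : Fin N → Option (Fin N)) : ℝ :=
  ∏ i : Fin N, (G i).elim 1 (w i)

/-- The spanning-tree polynomial: the sum over all spanning trees `T` of the complete
graph on `{1,…,N}` (i.e. over all trees on the vertex set `Fin N`) of the product of
the weights `w i j` over the edges `{i,j}` of `T`. -/
noncomputable def treePoly (N : ℕ) (w : Fin N → Fin N → ℝ) : ℝ :=
  ∑ T : SimpleGraph (Fin N),
    if T.IsTree then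
      ∏ p ∈ Finset.univ.filter (fun p : Fin N × Fin N => p.1 < p.2 ∧ T.Adj p.1 p.2), w p.1 p.2
    else 0

/-!
A forest `G` together with an enumeration `(a₁, …, a_m)` of its roots is the same thing as a
directed tree with root `t` and a marked vertex `s`. Adding the edges `a_r → a_{r+1}` makes `G` a
directed tree with root `t = a_m`, and one marks `s = a₁`; conversely the enumeration is recovered
as the directed path from `s` to `t`, and erasing the edges of that path gives `G` back. Under this
correspondence the weights multiply, so (`sum_forests_eq_sum_marked`) the left-hand side is the sum
over such marked trees of the weight of the tree times `(λ_s - λ_t)²`.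

For a fixed `t`, forgetting orientations is a bijection from the directed trees with root `t` onto
the spanning trees, and it preserves weights because `w` is symmetric. Hence
(`sum_rooted_eq_treePoly`) the trees with any given `s` and `t` contribute `(λ_s - λ_t)² τ(w)`, and
the sum of `(λ_s - λ_t)²` over ordered pairs is twice the sum over `i < j`.

Acyclicity is used throughout in the form of a rank function that strictly decreases along
the edges (`isForest_iff_rank`).
-/

/-! ### Acyclicity and rank functions -/

/-- A strictly decreasing rank function is a certificate of acyclicity, and every acyclic
successor map has one: the number of vertices reachable in a positive number of steps. -/
theorem isForest_iff_rank {N : ℕ} (G : Fin N → Option (Fin N)) :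
    IsForest G ↔ ∃ r : Fin N → ℕ, ∀ i j, G i = some j → r j < r i := by
  constructor
  · intro h
    have hstep : ∀ (i j : Fin N), G i = some j → ∀ n, stepIter G (n + 1) i = stepIter G n j := by
      intro i j hij n
      induction n with
      | zero => simp [stepIter, hij]
      | succ n ih => rw [stepIter, ih, stepIter]
    refine ⟨fun i => (Finset.univ.filter
      (fun k => ∃ n, 0 < n ∧ stepIter G n i = some k)).card, fun i j hij => ?_⟩
    apply Finset.card_lt_card
    rw [Finset.ssubset_iff_of_subset]
    · refine ⟨j, ?_, ?_⟩
      · simp only [Finset.mem_filter, Finset.mem_univ, true_and]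
        exact ⟨1, one_pos, by simp [stepIter, hij]⟩
      · simp only [Finset.mem_filter, Finset.mem_univ, true_and]
        rintro ⟨n, hn, h'⟩
        exact h j n hn h'
    · intro k
      simp only [Finset.mem_filter, Finset.mem_univ, true_and]
      rintro ⟨n, hn, h'⟩
      exact ⟨n + 1, Nat.succ_pos _, by rw [hstep i j hij, h']⟩
  · rintro ⟨r, hr⟩ i n hn
    have key : ∀ n j, stepIter G (n + 1) i = some j → r j < r i := by
      intro n
      induction n with
      | zero => intro j hj; exact hr i j (by simpa [stepIter] using hj)
      | succ n ih =>
        intro j hj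
        rw [stepIter, Option.bind_eq_some_iff] at hj
        obtain ⟨k, hk, hkj⟩ := hj
        exact (hr k j hkj).trans (ih k hk)
    obtain ⟨m, rfl⟩ := Nat.exists_eq_succ_of_ne_zero hn.ne'
    intro h
    exact lt_irrefl _ (key m i h)

theorem roots_eq_singleton_iff {N : ℕ} (G : Fin N → Option (Fin N)) (t : Fin N) :
    roots G = {t} ↔ ∀ x, G x = none ↔ x = t := by
  simp [roots, Finset.ext_iff]

/-! ### Cutting a rooted tree along the path from a marked vertex -/

/-- The successor map of a list: it sends each entry to the entry that follows it, and the
last entry and all vertices outside the list to `none`. -/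
def listSucc {N : ℕ} : List (Fin N) → Fin N → Option (Fin N)
  | [], _ => none
  | [_], _ => none
  | a :: b :: l, x => if x = a then some b else listSucc (b :: l) x

theorem listSucc_of_notMem {N : ℕ} (l : List (Fin N)) (x : Fin N) (hx : x ∉ l) :
    listSucc l x = none := by
  induction l with
  | nil => rfl
  | cons a l ih =>
    cases l with
    | nil => rfl
    | cons b l =>
      rw [List.mem_cons, not_or] at hx
      rw [listSucc, if_neg hx.1, ih hx.2]

theorem listSucc_cons_of_ne {N : ℕ} (l : List (Fin N)) (a x : Fin N) (hx : x ≠ a) :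
    listSucc (a :: l) x = listSucc l x := by
  cases l with
  | nil => rfl
  | cons b l => rw [listSucc, if_neg hx]

theorem listSucc_idxOf {N : ℕ} (l : List (Fin N)) (hl : l.Nodup) (x y : Fin N)
    (h : listSucc l x = some y) : y ∈ l ∧ l.idxOf y = l.idxOf x + 1 := by
  induction l with
  | nil => simp [listSucc] at h
  | cons a l ih =>
    cases l with
    | nil => simp [listSucc] at h
    | cons b l =>
      rw [List.nodup_cons] at hl
      by_cases hx : x = a
      · subst hx
        simp only [listSucc, if_true, Option.some.injEq] at h
        subst h
        have : x ≠ b := fun h => hl.1 (by simp [h])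
        simp [List.idxOf_cons_ne _ this]
      · rw [listSucc, if_neg hx] at h
        obtain ⟨h1, h2⟩ := ih hl.2 h
        have hya : a ≠ y := fun h => hl.1 (h ▸ h1)
        refine ⟨List.mem_cons_of_mem _ h1, ?_⟩
        rw [List.idxOf_cons_ne _ hya, List.idxOf_cons_ne _ (Ne.symm hx), h2]

theorem listSucc_eq_none_iff {N : ℕ} (l : List (Fin N)) (hl : l.Nodup) (x : Fin N) (hx : x ∈ l) :
    listSucc l x = none ↔ l.getLast? = some x := by
  induction l with
  | nil => simp at hx
  | cons a l ih =>
    cases l with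
    | nil => simpa [listSucc] using (List.mem_singleton.1 hx).symm
    | cons b l =>
      rw [List.nodup_cons] at hl
      rw [List.getLast?_cons_cons]
      by_cases h : x = a
      · subst h
        simp only [listSucc, if_true, reduceCtorEq, false_iff]
        intro h
        exact hl.1 (List.mem_of_getLast? h)
      · rw [listSucc, if_neg h]
        exact ih hl.2 ((List.mem_cons.1 hx).resolve_left h)

theorem prod_listSucc {N : ℕ} (w : Fin N → Fin N → ℝ) (l : List (Fin N)) (hl : l.Nodup) :
    ∏ x, (listSucc l x).elim 1 (w x) = chainProd w l := by
  induction l with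
  | nil => simp [listSucc, chainProd]
  | cons a l ih =>
    cases l with
    | nil => simp [listSucc, chainProd]
    | cons b l =>
      rw [List.nodup_cons] at hl
      have h1 : chainProd w (a :: b :: l) = w a b * chainProd w (b :: l) := by
        simp [chainProd]
      rw [h1, ← ih hl.2, ← Finset.mul_prod_erase _ _ (Finset.mem_univ a),
        ← Finset.mul_prod_erase Finset.univ
          (fun x => (listSucc (b :: l) x).elim 1 (w x)) (Finset.mem_univ a)]
      rw [listSucc_of_notMem _ a hl.1]
      simp only [listSucc, if_true, Option.elim_some, Option.elim_none, one_mul]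
      congr 1
      refine Finset.prod_congr rfl fun x hx => ?_
      rw [if_neg (Finset.ne_of_mem_erase hx)]

/-- In a directed tree with root `t`, every vertex `s` starts a directed path ending in `t`.
The bound on the ranks along the path is what makes the induction give `l.Nodup`. -/
theorem exists_pathList {N : ℕ} (G : Fin N → Option (Fin N)) (r : Fin N → ℕ)
    (hr : ∀ i j, G i = some j → r j < r i) (t : Fin N) (ht : ∀ x, G x = none ↔ x = t) (s : Fin N) :
    ∃ l : List (Fin N), l.head? = some s ∧ l.getLast? = some t ∧ l.Nodup ∧
      (∀ x ∈ l, r x ≤ r s) ∧ ∀ x ∈ l, listSucc l x = G x := by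
  induction hn : r s using Nat.strong_induction_on generalizing s with
  | _ n ih =>
    subst hn
    cases hs : G s with
    | none =>
      refine ⟨[s], by simp, by simp [(ht s).1 hs], by simp, by simp, by simp [listSucc, hs]⟩
    | some y =>
      have hlt := hr s y hs
      obtain ⟨l, h1, h2, h3, h4, h5⟩ := ih (r y) hlt y rfl
      cases l with
      | nil => simp at h1
      | cons b l =>
        simp only [List.head?_cons, Option.some.injEq] at h1
        subst h1
        have hns : s ∉ b :: l := fun h => absurd (h4 s h) (by omega)
        refine ⟨s :: b :: l, rfl, by rw [List.getLast?_cons_cons, h2],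
          List.nodup_cons.2 ⟨hns, h3⟩, ?_, ?_⟩
        · intro x hx
          rcases List.mem_cons.1 hx with rfl | hx
          · exact le_rfl
          · exact (h4 x hx).trans hlt.le
        · intro x hx
          rcases List.mem_cons.1 hx with rfl | hx
          · simp [listSucc, hs]
          · rw [listSucc_cons_of_ne _ _ _ (fun h : x = s => hns (h ▸ hx)), h5 x hx]

/-- A duplicate-free list that follows `G` and stops exactly where `G` stops is determined by
its first entry. -/
theorem pathList_unique {N : ℕ} (G : Fin N → Option (Fin N)) (l₁ l₂ : List (Fin N))
    (hd₁ : l₁.Nodup) (hd₂ : l₂.Nodup) (hh : l₁.head? = l₂.head?)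
    (h₁ : ∀ x ∈ l₁, listSucc l₁ x = G x) (h₂ : ∀ x ∈ l₂, listSucc l₂ x = G x) : l₁ = l₂ := by
  induction l₁ generalizing l₂ with
  | nil => cases l₂ with
    | nil => rfl
    | cons b l => simp at hh
  | cons a l₁ ih =>
    cases l₂ with
    | nil => simp at hh
    | cons b l₂ =>
      simp only [List.head?_cons, Option.some.injEq] at hh
      subst hh
      rw [List.nodup_cons] at hd₁ hd₂
      have e := (h₁ a (by simp)).trans (h₂ a (by simp)).symm
      congr 1
      refine ih l₂ hd₁.2 hd₂.2 ?_ ?_ ?_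
      · cases l₁ <;> cases l₂ <;> simp_all [listSucc]
      · intro x hx
        rw [← h₁ x (List.mem_cons_of_mem _ hx), listSucc_cons_of_ne]
        rintro rfl
        exact hd₁.1 hx
      · intro x hx
        rw [← h₂ x (List.mem_cons_of_mem _ hx), listSucc_cons_of_ne]
        rintro rfl
        exact hd₂.1 hx

/-- The graph obtained from `G` by adding the edges between consecutive entries of `l`
(where `G` has no outgoing edge yet). -/
def addPath {N : ℕ} (G : Fin N → Option (Fin N)) (l : List (Fin N)) : Fin N → Option (Fin N) :=
  fun x => (G x).or (listSucc l x)

theorem addPath_of_mem {N : ℕ} {G : Fin N → Option (Fin N)} {l : List (Fin N)}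
    (hl : ∀ x, x ∈ l ↔ G x = none) {x : Fin N} (hx : x ∈ l) :
    addPath G l x = listSucc l x := by
  simp [addPath, (hl x).1 hx]

theorem addPath_of_notMem {N : ℕ} (G : Fin N → Option (Fin N)) {l : List (Fin N)}
    {x : Fin N} (hx : x ∉ l) : addPath G l x = G x := by
  simp [addPath, listSucc_of_notMem l x hx]

theorem isForest_addPath {N : ℕ} (G : Fin N → Option (Fin N)) (l : List (Fin N))
    (hd : l.Nodup) (hl : ∀ x, x ∈ l ↔ G x = none) (hG : IsForest G) :
    IsForest (addPath G l) := by
  rw [isForest_iff_rank] at hG ⊢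
  obtain ⟨r, hr⟩ := hG
  -- path vertices are ranked by their distance to the end of `l`, all others lie above them
  refine ⟨fun x => if x ∈ l then l.length - l.idxOf x else r x + l.length + 1, fun i j hij => ?_⟩
  by_cases hi : i ∈ l
  · rw [addPath_of_mem hl hi] at hij
    obtain ⟨hj, hidx⟩ := listSucc_idxOf l hd i j hij
    have := List.idxOf_lt_length_of_mem hj
    simp only [hi, hj, if_true]
    omega
  · rw [addPath_of_notMem G hi] at hij
    have := hr i j hij
    simp only [hi, if_false]
    split_ifs <;> omega

theorem forestWeight_addPath {N : ℕ} (w : Fin N → Fin N → ℝ) (G : Fin N → Option (Fin N))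
    (l : List (Fin N)) (hd : l.Nodup) (hl : ∀ x, x ∈ l ↔ G x = none) :
    forestWeight w (addPath G l) = forestWeight w G * chainProd w l := by
  rw [← prod_listSucc w l hd, forestWeight, forestWeight, ← Finset.prod_mul_distrib]
  refine Finset.prod_congr rfl fun x _ => ?_
  by_cases hx : x ∈ l
  · rw [addPath_of_mem hl hx, (hl x).1 hx]; simp
  · rw [addPath_of_notMem G hx, listSucc_of_notMem l x hx]; simp

theorem mem_enumerations {N : ℕ} (G : Fin N → Option (Fin N)) (l : List (Fin N)) :
    l ∈ (roots G).toList.permutations.toFinset ↔ l.Nodup ∧ ∀ x, x ∈ l ↔ G x = none := by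
  rw [List.mem_toFinset, List.mem_permutations]
  have hx : ∀ x, x ∈ (roots G).toList ↔ G x = none := by simp [roots]
  constructor
  · intro h
    exact ⟨h.nodup_iff.2 (Finset.nodup_toList _), fun x => by rw [h.mem_iff, hx]⟩
  · rintro ⟨h1, h2⟩
    rw [List.perm_ext_iff_of_nodup h1 (Finset.nodup_toList _)]
    intro x
    rw [h2, hx]

/-- Joining the roots of a forest into a directed path turns the sum over forests with
enumerated roots into a sum over directed trees with root `t` and a marked vertex `s`. -/
theorem sum_forests_eq_sum_marked {N : ℕ} [NeZero N] (w : Fin N → Fin N → ℝ) (lam : Fin N → ℝ) :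
    ∑ G ∈ (Finset.univ : Finset (Fin N → Option (Fin N))).filter IsForest,
      forestWeight w G * pathPoly₂ w lam (roots G)
    = ∑ q ∈ (Finset.univ : Finset ((Fin N → Option (Fin N)) × Fin N × Fin N)).filter
        (fun q => IsForest q.1 ∧ roots q.1 = {q.2.2}),
        forestWeight w q.1 * (lam q.2.1 - lam q.2.2) ^ 2 := by
  have hpoly : ∀ G : Fin N → Option (Fin N), pathPoly₂ w lam (roots G)
      = ∑ l ∈ (roots G).toList.permutations.toFinset,
          chainProd w l * (l.head?.elim 0 lam - l.getLast?.elim 0 lam) ^ 2 := by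
    intro G
    rw [pathPoly₂, List.sum_toFinset _ (List.nodup_permutations _ (Finset.nodup_toList _))]
  simp only [hpoly, Finset.mul_sum]
  rw [Finset.sum_sigma']
  have hdata : ∀ (G : Fin N → Option (Fin N)) (l : List (Fin N)), IsForest G →
      (∀ x, x ∈ l ↔ G x = none) → ∃ s t, l.head? = some s ∧ l.getLast? = some t := by
    intro G l hG hl
    have hne : l ≠ [] := by
      rintro rfl
      obtain ⟨r, hr⟩ := (isForest_iff_rank G).1 hG
      obtain ⟨i, hi⟩ := Finite.exists_min r
      cases h : G i with
      | none => simpa using (hl i).2 h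
      | some j => exact absurd (hr i j h) (hi j).not_gt
    exact ⟨_, _, List.head?_eq_some_head hne, List.getLast?_eq_some_getLast hne⟩
  refine Finset.sum_nbij
    (fun p => (addPath p.1 p.2, p.2.head?.getD 0, p.2.getLast?.getD 0)) ?_ ?_ ?_ ?_
  · rintro ⟨G, l⟩ h
    simp only [Finset.mem_sigma, Finset.mem_filter, Finset.mem_univ, true_and,
      mem_enumerations] at h ⊢
    obtain ⟨hG, hd, hl⟩ := h
    obtain ⟨s, t, hs, ht⟩ := hdata G l hG hl
    refine ⟨isForest_addPath G l hd hl hG, ?_⟩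
    rw [roots_eq_singleton_iff, ht]
    intro x
    simp only [Option.getD_some]
    by_cases hx : x ∈ l
    · rw [addPath_of_mem hl hx, listSucc_eq_none_iff l hd x hx, ht, Option.some.injEq, eq_comm]
    · rw [addPath_of_notMem G hx, ← hl]
      refine iff_of_false hx ?_
      rintro rfl
      exact hx (List.mem_of_getLast? ht)
  · rintro ⟨G, l⟩ h ⟨G', l'⟩ h' e
    simp only [Finset.mem_coe, Finset.mem_sigma, Finset.mem_filter, Finset.mem_univ, true_and,
      mem_enumerations] at h h'
    obtain ⟨hG, hd, hl⟩ := h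
    obtain ⟨hG', hd', hl'⟩ := h'
    obtain ⟨s, t, hs, ht⟩ := hdata G l hG hl
    obtain ⟨s', t', hs', ht'⟩ := hdata G' l' hG' hl'
    simp only [hs, hs', ht, ht', Option.getD_some, Prod.mk.injEq] at e
    obtain ⟨e1, e2, -⟩ := e
    have hll : l = l' := by
      refine pathList_unique (addPath G l) l l' hd hd' (by rw [hs, hs', e2]) ?_ ?_
      · intro x hx
        rw [addPath_of_mem hl hx]
      · intro x hx
        rw [e1, addPath_of_mem hl' hx]
    subst hll
    have hGG : G = G' := by
      funext x
      by_cases hx : x ∈ l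
      · rw [(hl x).1 hx, (hl' x).1 hx]
      · rw [← addPath_of_notMem G hx, e1, addPath_of_notMem G' hx]
    rw [hGG]
  · rintro ⟨G, s, t⟩ h
    simp only [Finset.coe_filter, Finset.mem_univ, true_and, Set.mem_ofPred_eq,
      roots_eq_singleton_iff] at h
    obtain ⟨hG, ht⟩ := h
    obtain ⟨r, hr⟩ := (isForest_iff_rank G).1 hG
    obtain ⟨l, h1, h2, h3, -, h5⟩ := exists_pathList G r hr t ht s
    -- the preimage: erase the outgoing edges along the path
    let G₀ : Fin N → Option (Fin N) := fun x => if x ∈ l then none else G x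
    have hl : ∀ x, x ∈ l ↔ G₀ x = none := by
      intro x
      by_cases hx : x ∈ l
      · simp [G₀, hx]
      · simp only [G₀, hx, if_false, false_iff, ht]
        rintro rfl
        exact hx (List.mem_of_getLast? h2)
    refine ⟨⟨G₀, l⟩, ?_, ?_⟩
    · simp only [Finset.mem_coe, Finset.mem_sigma, Finset.mem_filter, Finset.mem_univ, true_and,
        mem_enumerations]
      refine ⟨(isForest_iff_rank _).2 ⟨r, fun i j hij => hr i j ?_⟩, h3, hl⟩
      by_cases hi : i ∈ l
      · simp [G₀, hi] at hij
      · simpa [G₀, hi] using hij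
    · simp only [h1, h2, Option.getD_some, Prod.mk.injEq, and_true]
      funext x
      by_cases hx : x ∈ l
      · rw [addPath_of_mem hl hx, h5 x hx]
      · rw [addPath_of_notMem G₀ hx]
        simp [G₀, hx]
  · rintro ⟨G, l⟩ h
    simp only [Finset.mem_sigma, Finset.mem_filter, Finset.mem_univ, true_and,
      mem_enumerations] at h
    obtain ⟨hG, hd, hl⟩ := h
    obtain ⟨s, t, hs, ht⟩ := hdata G l hG hl
    simp only [hs, ht, Option.getD_some, Option.elim_some, forestWeight_addPath w G l hd hl,
      mul_assoc]

/-! ### Rooted directed trees and spanning trees -/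

/-- The simple graph underlying the directed graph `G`. -/
def underlying {N : ℕ} (G : Fin N → Option (Fin N)) : SimpleGraph (Fin N) :=
  SimpleGraph.fromRel (fun x y => G x = some y)

theorem ne_of_rank {N : ℕ} {G : Fin N → Option (Fin N)} (hG : IsForest G) {x y : Fin N}
    (h : G x = some y) : x ≠ y ∧ G y ≠ some x := by
  obtain ⟨r, hr⟩ := (isForest_iff_rank G).1 hG
  have h1 := hr x y h
  refine ⟨?_, fun h' => absurd (hr y x h') (by omega)⟩
  rintro rfl
  exact lt_irrefl _ h1

theorem underlying_adj {N : ℕ} {G : Fin N → Option (Fin N)} (hG : IsForest G) (x y : Fin N) :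
    (underlying G).Adj x y ↔ G x = some y ∨ G y = some x := by
  rw [underlying, SimpleGraph.fromRel_adj]
  refine ⟨fun h => h.2, fun h => ⟨?_, h⟩⟩
  rcases h with h | h
  · exact (ne_of_rank hG h).1
  · exact (ne_of_rank hG h).1.symm

theorem isTree_underlying {N : ℕ} {G : Fin N → Option (Fin N)} (hG : IsForest G) {t : Fin N}
    (ht : ∀ x, G x = none ↔ x = t) : (underlying G).IsTree := by
  obtain ⟨r, hr⟩ := (isForest_iff_rank G).1 hG
  have hreach : ∀ n x, r x = n → (underlying G).Reachable x t := by
    intro n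
    induction n using Nat.strong_induction_on with
    | _ n ih =>
      intro x hx
      cases h : G x with
      | none => rw [(ht x).1 h]
      | some y =>
        have hadj : (underlying G).Adj x y := (underlying_adj hG x y).2 (Or.inl h)
        exact hadj.reachable.trans (ih (r y) (hx ▸ hr x y h) y rfl)
  have hconn : (underlying G).Connected :=
    { preconnected := fun x y => (hreach _ x rfl).trans (hreach _ y rfl).symm
      nonempty := ⟨t⟩ }
  rw [SimpleGraph.isTree_iff_connected_and_card]
  refine ⟨hconn, le_antisymm ?_ hconn.card_vert_le_card_edgeSet_add_one⟩
  -- every edge has the form `{x, G x}` for some non-root `x`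
  have hsub : (underlying G).edgeFinset ⊆
      (Finset.univ.erase t).image (fun x => s(x, (G x).getD x)) := by
    intro e
    induction e using Sym2.ind with
    | _ x y =>
      rw [SimpleGraph.mem_edgeFinset, SimpleGraph.mem_edgeSet, underlying_adj hG]
      rintro (h | h)
      · refine Finset.mem_image.2 ⟨x, Finset.mem_erase.2 ⟨?_, Finset.mem_univ _⟩, by simp [h]⟩
        rw [Ne, ← ht, h]; simp
      · refine Finset.mem_image.2 ⟨y, Finset.mem_erase.2 ⟨?_, Finset.mem_univ _⟩,
          by simp [h, Sym2.eq_swap]⟩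
        rw [Ne, ← ht, h]; simp
  have h1 := (Finset.card_le_card hsub).trans Finset.card_image_le
  rw [Finset.card_erase_of_mem (Finset.mem_univ t)] at h1
  have h2 : 0 < (Finset.univ : Finset (Fin N)).card := Finset.card_pos.2 ⟨t, Finset.mem_univ t⟩
  rw [Nat.card_eq_fintype_card, ← SimpleGraph.edgeFinset_card, Nat.card_eq_fintype_card,
    ← Finset.card_univ]
  omega

/-- A directed tree is determined by its root and its underlying graph. -/
theorem eq_of_underlying_eq {N : ℕ} {G G' : Fin N → Option (Fin N)} (hG : IsForest G)
    (hG' : IsForest G') {t : Fin N} (ht : ∀ x, G x = none ↔ x = t)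
    (ht' : ∀ x, G' x = none ↔ x = t) (h : underlying G = underlying G') : G = G' := by
  obtain ⟨r, hr⟩ := (isForest_iff_rank G).1 hG
  have key : ∀ n x, r x = n → G x = G' x := by
    intro n
    induction n using Nat.strong_induction_on with
    | _ n ih =>
      intro x hx
      cases hy : G x with
      | none => rw [(ht' x).2 ((ht x).1 hy)]
      | some y =>
        have hadj : (underlying G).Adj x y := (underlying_adj hG x y).2 (Or.inl hy)
        rw [h, underlying_adj hG'] at hadj
        rcases hadj with h1 | h1
        · exact h1.symm
        · rw [← ih (r y) (hx ▸ hr x y hy) y rfl] at h1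
          exact absurd h1 (ne_of_rank hG hy).2
  exact funext fun x => key _ x rfl

/-- Every tree can be directed towards any given vertex `t`: each other vertex points to a
neighbour closer to `t`. -/
theorem exists_orientation {N : ℕ} (T : SimpleGraph (Fin N)) (hT : T.IsTree) (t : Fin N) :
    ∃ G : Fin N → Option (Fin N), IsForest G ∧ (∀ x, G x = none ↔ x = t) ∧ underlying G = T := by
  have hnext : ∀ x, x ≠ t → ∃ y, T.Adj x y ∧ T.dist y t < T.dist x t := by
    intro x hx
    obtain ⟨p, hp⟩ := hT.connected.exists_walk_length_eq_dist x t
    cases p with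
    | nil => exact absurd rfl hx
    | cons hadj q =>
      rename_i y
      refine ⟨y, hadj, ?_⟩
      have := SimpleGraph.dist_le q
      rw [SimpleGraph.Walk.length_cons] at hp
      omega
  choose! f hf using hnext
  let G : Fin N → Option (Fin N) := fun x => if x = t then none else some (f x)
  have hsome : ∀ x y, G x = some y → x ≠ t ∧ f x = y := by
    intro x y h
    by_cases hx : x = t
    · simp [G, hx] at h
    · exact ⟨hx, by simpa [G, hx] using h⟩
  have hG : IsForest G := by
    refine (isForest_iff_rank G).2 ⟨fun x => T.dist x t, fun x y h => ?_⟩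
    obtain ⟨h1, rfl⟩ := hsome x y h
    exact (hf x h1).2
  have ht : ∀ x, G x = none ↔ x = t := by
    intro x
    by_cases hx : x = t <;> simp [G, hx]
  refine ⟨G, hG, ht, ?_⟩
  have hle : underlying G ≤ T := by
    intro x y h
    rcases (underlying_adj hG x y).1 h with h | h
    · obtain ⟨h1, rfl⟩ := hsome x y h
      exact (hf x h1).1
    · obtain ⟨h1, rfl⟩ := hsome y x h
      exact (hf y h1).1.symm
  -- a tree is a minimal connected graph
  exact le_antisymm hle ((SimpleGraph.isTree_iff_minimal_connected.1 hT).2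
    (isTree_underlying hG ht).connected hle)

theorem forestWeight_eq_prod_underlying {N : ℕ} (w : Fin N → Fin N → ℝ)
    (hsym : ∀ i j, w i j = w j i) {G : Fin N → Option (Fin N)} (hG : IsForest G) :
    forestWeight w G = ∏ p ∈ Finset.univ.filter
      (fun p : Fin N × Fin N => p.1 < p.2 ∧ (underlying G).Adj p.1 p.2), w p.1 p.2 := by
  have h0 : forestWeight w G = ∏ x ∈ Finset.univ.filter (fun x => G x ≠ none),
      (G x).elim 1 (w x) := by
    rw [forestWeight, Finset.prod_filter_of_ne]
    intro x _ hx h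
    exact hx (by simp [h])
  rw [h0]
  refine Finset.prod_nbij
    (fun x => if x < (G x).getD x then (x, (G x).getD x) else ((G x).getD x, x)) ?_ ?_ ?_ ?_
  · intro x hx
    simp only [Finset.mem_filter, Finset.mem_univ, true_and] at hx ⊢
    obtain ⟨y, hy⟩ := Option.ne_none_iff_exists'.1 hx
    have hne := (ne_of_rank hG hy).1
    simp only [hy, Option.getD_some, underlying_adj hG]
    split_ifs with h
    · exact ⟨h, Or.inl hy⟩
    · exact ⟨lt_of_le_of_ne (not_lt.1 h) hne.symm, Or.inr hy⟩
  · intro x hx x' hx' e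
    simp only [Finset.coe_filter, Finset.mem_univ, true_and, Set.mem_ofPred_eq] at hx hx'
    obtain ⟨y, hy⟩ := Option.ne_none_iff_exists'.1 hx
    obtain ⟨y', hy'⟩ := Option.ne_none_iff_exists'.1 hx'
    simp only [hy, hy', Option.getD_some] at e
    -- equal endpoints in opposite order would be a directed 2-cycle
    have h2 : ¬ (x = y' ∧ y = x') := by
      rintro ⟨rfl, rfl⟩
      exact (ne_of_rank hG hy).2 hy'
    split_ifs at e <;> simp only [Prod.mk.injEq] at e
    · exact e.1
    · exact absurd e h2
    · exact absurd e.symm h2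
    · exact e.2
  · rintro ⟨a, b⟩ h
    simp only [Finset.coe_filter, Finset.mem_univ, true_and, Set.mem_ofPred_eq,
      underlying_adj hG] at h
    obtain ⟨hab, h | h⟩ := h
    · exact ⟨a, by simp [h], by simp [h, hab]⟩
    · exact ⟨b, by simp [h], by simp [h, hab.not_gt]⟩
  · intro x hx
    simp only [Finset.mem_filter, Finset.mem_univ, true_and] at hx
    obtain ⟨y, hy⟩ := Option.ne_none_iff_exists'.1 hx
    simp only [hy, Option.getD_some, Option.elim_some]
    split_ifs
    · rfl
    · exact hsym x y

/-- The generating function of the directed trees with a fixed root is the spanning-tree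
polynomial, whatever the root. -/
theorem sum_rooted_eq_treePoly {N : ℕ} (w : Fin N → Fin N → ℝ)
    (hsym : ∀ i j, w i j = w j i) (t : Fin N) :
    ∑ G ∈ (Finset.univ : Finset (Fin N → Option (Fin N))).filter
      (fun G => IsForest G ∧ roots G = {t}), forestWeight w G = treePoly N w := by
  rw [treePoly, ← Finset.sum_filter]
  simp only [roots_eq_singleton_iff]
  refine Finset.sum_nbij underlying ?_ ?_ ?_ ?_
  · intro G h
    simp only [Finset.mem_filter, Finset.mem_univ, true_and] at h ⊢
    exact isTree_underlying h.1 h.2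
  · intro G h G' h' e
    simp only [Finset.coe_filter, Finset.mem_univ, true_and, Set.mem_ofPred_eq] at h h'
    exact eq_of_underlying_eq h.1 h'.1 h.2 h'.2 e
  · intro T h
    simp only [Finset.coe_filter, Finset.mem_univ, true_and, Set.mem_ofPred_eq] at h
    obtain ⟨G, h1, h2, h3⟩ := exists_orientation T h t
    exact ⟨G, by simpa using ⟨h1, h2⟩, h3⟩
  · intro G h
    simp only [Finset.mem_filter, Finset.mem_univ, true_and] at h
    exact forestWeight_eq_prod_underlying w hsym h.1

theorem sum_sq_sub {N : ℕ} (lam : Fin N → ℝ) :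
    ∑ t, ∑ s, (lam s - lam t) ^ 2
      = 2 * ∑ p ∈ Finset.univ.filter (fun p : Fin N × Fin N => p.1 < p.2),
          (lam p.1 - lam p.2) ^ 2 := by
  rw [Finset.sum_filter, Fintype.sum_prod_type, two_mul]
  nth_rewrite 2 [Finset.sum_comm]
  simp only [← Finset.sum_add_distrib]
  refine Finset.sum_congr rfl fun t _ => Finset.sum_congr rfl fun s _ => ?_
  rcases lt_trichotomy t s with h | h | h
  · simp only [h, h.not_gt, if_true, if_false]; ring
  · subst h; simp
  · simp only [h, h.not_gt, if_true, if_false]; ring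

/-- The sum over all directed forests `G` on `{1,…,N}` of the product of the edge
weights of `G` times the weighted-endpoint path polynomial `H₂` of the set of roots
of `G` equals `2 · (∑_{i<j} (λ_i - λ_j)²) · τ(w)`. -/
theorem sum_forests_pathPoly₂_roots_eq
    (N : ℕ) (hN : 1 ≤ N) (w : Fin N → Fin N → ℝ)
    (hsym : ∀ i j : Fin N, w i j = w j i) (lam : Fin N → ℝ) :
    ∑ G ∈ (Finset.univ : Finset (Fin N → Option (Fin N))).filter IsForest,
      forestWeight w G * pathPoly₂ w lam (roots G)
      = 2 * (∑ p ∈ Finset.univ.filter (fun p : Fin N × Fin N => p.1 < p.2),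
          (lam p.1 - lam p.2) ^ 2) * treePoly N w := by
  have : NeZero N := ⟨by omega⟩
  rw [sum_forests_eq_sum_marked, Finset.sum_filter, Fintype.sum_prod_type_right,
    Fintype.sum_prod_type_right, ← sum_sq_sub, Finset.sum_mul]
  refine Finset.sum_congr rfl fun t _ => ?_
  rw [Finset.sum_mul]
  refine Finset.sum_congr rfl fun s _ => ?_
  rw [← sum_rooted_eq_treePoly w hsym t, Finset.mul_sum, Finset.sum_filter]
  refine Finset.sum_congr rfl fun G _ => ?_
  simp only [mul_comm]
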